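/- For any w ∈ W with w ≠ 1 there exist w' ∈ W, γ ∈ R^+ and an index 1 ≤ j ≤ n such that w = w's_γ, ℓ(w) = ℓ(w') + 1, ⟨χ_j, γ^∨⟩ > 0, and gr(w) = gr(w') + e_m, where m is the unique index with α_j ∈ Δ_m \ Δ_{m−1}. -/

import Mathlib

/-!
Write `w = v_{r+1} ⋯ v_1`, let `x = v_m` be the leftmost nontrivial factor and `u = v_{m-1} ⋯ v_1`,
so that `w = x u`.  A left descent `s_a` of `x` with `a ∈ Δ_m` gives another minimal coset
representative `x' = s_a x = x s_β`, where `β = -x⁻¹ α_a` is a positive root of `R_{Δ_m}`.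
Since `x` maps the positive roots of `R_{Δ_{m-1}}` to positive roots but `β` to `-α_a`, the root `β`
has a positive coefficient at some `α_j` with `j ∈ Δ_m \ Δ_{m-1}`.  Put `γ = u⁻¹ β`: then
`w = (x' u) s_γ`, and `u` does not touch the coefficient at `α_j`, so `γ` is positive and has `α_j`
in its support.  The coefficients of `γ^∨` are those of `γ` up to positive factors, whence
`⟨χ_j, γ^∨⟩ > 0`.  The decomposition of `x' u` is that of `w` with `x` replaced by `x'`.
-/

open scoped BigOperators

/-- A reduced crystallographic root system with a fixed base `α_1, …, α_n` of simple
roots, bundled with its Weyl group `W`.  A root `γ` is recorded by its integer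
coordinate vector in the basis of simple roots (so the `i`-th simple root is
`Pi.single i 1`), and `cor γ` is the coordinate vector of the coroot `γ^∨` in the
basis of simple coroots (hence `cor γ i = ⟨χ_i, γ^∨⟩` for the fundamental weights
`χ_i`).  `A i j = ⟨α_i, α_j^∨⟩` is the Cartan matrix, `σ γ` is the reflection `s_γ`
and `act` is the action of the Weyl group on the root lattice. -/
structure RootSystemData (n : ℕ) where
  A : Fin n → Fin n → ℤ
  R : Finset (Fin n → ℤ)
  cor : (Fin n → ℤ) → (Fin n → ℤ)
  W : Type
  [grp : Group W]
  σ : (Fin n → ℤ) → W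
  act : W → (Fin n → ℤ) → (Fin n → ℤ)
  simple_mem : ∀ i : Fin n, (Pi.single i 1 : Fin n → ℤ) ∈ R
  root_ne_zero : ∀ γ ∈ R, γ ≠ 0
  neg_mem : ∀ γ ∈ R, -γ ∈ R
  pos_or_neg : ∀ γ ∈ R, (∀ i, 0 ≤ γ i) ∨ (∀ i, γ i ≤ 0)
  reduced : ∀ γ ∈ R, ∀ k : ℤ, k • γ ∈ R → k = 1 ∨ k = -1
  cor_simple : ∀ i : Fin n, cor (Pi.single i 1) = Pi.single i 1
  cor_neg : ∀ γ ∈ R, cor (-γ) = -(cor γ)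
  pair_self : ∀ γ ∈ R, (∑ i, ∑ j, γ i * A i j * cor γ j) = 2
  act_one : ∀ x, act 1 x = x
  act_mul : ∀ w w' x, act (w * w') x = act w (act w' x)
  act_refl : ∀ γ ∈ R, ∀ x, act (σ γ) x = x - (∑ i, ∑ j, x i * A i j * cor γ j) • γ
  act_mem : ∀ (w : W), ∀ γ ∈ R, act w γ ∈ R
  cor_refl : ∀ γ ∈ R, ∀ β ∈ R,
    cor (act (σ γ) β) = cor β - (∑ i, ∑ j, γ i * A i j * cor β j) • cor γ
  refl_sq : ∀ γ ∈ R, σ γ * σ γ = 1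
  refl_act : ∀ (w : W), ∀ γ ∈ R, σ (act w γ) = w * σ γ * w⁻¹
  act_faithful : ∀ w w' : W, (∀ γ ∈ R, act w γ = act w' γ) → w = w'
  generated : ∀ w : W, ∃ l : List (Fin n), w = (l.map fun i => σ (Pi.single i 1)).prod

namespace RootSystemData

instance {n : ℕ} (c : RootSystemData n) : Group c.W := c.grp

/-- the pairing `⟨x, λ⟩` between an element `x` of the root lattice (coordinates in
the basis of simple roots) and an element `λ` of the coroot lattice (coordinates in
the basis of simple coroots) -/
def pair {n : ℕ} (c : RootSystemData n) (x lam : Fin n → ℤ) : ℤ :=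
  ∑ i, ∑ j, x i * c.A i j * lam j

/-- the `i`-th simple root -/
def sroot {n : ℕ} (_c : RootSystemData n) (i : Fin n) : Fin n → ℤ := Pi.single i 1

/-- the simple reflection `s_i` -/
def s {n : ℕ} (c : RootSystemData n) (i : Fin n) : c.W := c.σ (c.sroot i)

/-- `s_{α_{t+1}}` for a `0`-based natural number index `t` (`= 1` when out of range) -/
def sN {n : ℕ} (c : RootSystemData n) (t : ℕ) : c.W := if h : t < n then c.s ⟨t, h⟩ else 1

/-- `⟨2ρ, λ⟩ = Σ_{β ∈ R^+} ⟨β, λ⟩`, where `ρ` is the half-sum of the positive roots -/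
def pairTwoRho {n : ℕ} (c : RootSystemData n) (lam : Fin n → ℤ) : ℤ :=
  ∑ β ∈ c.R, if ∀ i, 0 ≤ β i then c.pair β lam else 0

/-- the length of `w ∈ W` with respect to the simple reflections -/
noncomputable def len {n : ℕ} (c : RootSystemData n) (w : c.W) : ℕ :=
  sInf {k | ∃ l : List (Fin n), l.length = k ∧ (l.map c.s).prod = w}

/-- the parabolic subgroup `W_S` generated by the simple reflections indexed by `S` -/
def Wsub {n : ℕ} (c : RootSystemData n) (S : Finset (Fin n)) : Subgroup c.W :=
  Subgroup.closure (c.s '' ↑S)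

/-- `w ∈ W_T^S`: `w ∈ W_T` and `w` has minimal length in the coset `w W_S` -/
def MinRep {n : ℕ} (c : RootSystemData n) (T S : Finset (Fin n)) (w : c.W) : Prop :=
  w ∈ c.Wsub T ∧ ∀ u ∈ c.Wsub S, c.len w ≤ c.len (w * u)

/-- `w` is the longest element of `W_S` -/
def IsLongest {n : ℕ} (c : RootSystemData n) (S : Finset (Fin n)) (w : c.W) : Prop :=
  w ∈ c.Wsub S ∧ ∀ v ∈ c.Wsub S, c.len v ≤ c.len w

end RootSystemData

/-- the support of `γ` is contained in `S`, i.e. `γ` lies in the span of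
`{α_i : i ∈ S}` (for a root `γ`, membership in `R_S`) -/
def suppIn {n : ℕ} (S : Finset (Fin n)) (γ : Fin n → ℤ) : Prop :=
  ∀ i, i ∉ S → γ i = 0

/-- `Δ_j` for `0 ≤ j ≤ r+1`: the index set of the first `j` simple roots for `j ≤ r`,
and all of `Δ` for `j = r+1`.  (Indices of simple roots are `0`-based, so
`α_1, …, α_j` correspond to the indices `0, …, j-1`.) -/
def deltaSet (n r j : ℕ) : Finset (Fin n) :=
  if j = r + 1 then Finset.univ else Finset.univ.filter fun i => (i : ℕ) < j

namespace RootSystemData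

/-- `v 0, …, v r` (standing for `v_1, …, v_{r+1}`) is the decomposition of `w`
associated to `(Δ_P, Υ)`:  each `v_i ∈ W_{Δ_i}^{Δ_{i-1}}` and `w = v_{r+1} v_r ⋯ v_1`. -/
def IsDecomp {n : ℕ} (c : RootSystemData n) (r : ℕ) (w : c.W)
    (v : Fin (r + 1) → c.W) : Prop :=
  (∀ k : Fin (r + 1), c.MinRep (deltaSet n r ((k : ℕ) + 1)) (deltaSet n r (k : ℕ)) (v k)) ∧
    w = (List.ofFn v).reverse.prod

/-- the first `m` simple roots `α_1, …, α_m` form a path of type `A_m`: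
`⟨α_i, α_j^∨⟩ = -1` if `|i-j| = 1` and `⟨α_i, α_j^∨⟩ = 0` if `|i-j| ≥ 2`. -/
def PathA {n : ℕ} (c : RootSystemData n) (m : ℕ) : Prop :=
  ∀ i j : Fin n, (i : ℕ) < m → (j : ℕ) < m →
    (((i : ℕ) + 1 = (j : ℕ) ∨ (j : ℕ) + 1 = (i : ℕ)) → c.A i j = -1) ∧
    ((i : ℕ) + 2 ≤ (j : ℕ) ∨ (j : ℕ) + 2 ≤ (i : ℕ) → c.A i j = 0)

/-- `u_{[k,m]} = s_k s_{k+1} ⋯ s_m` (`1`-based indices; `u_{[k,m]} = 1` for `k > m`) -/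
def uu {n : ℕ} (c : RootSystemData n) (k m : ℕ) : c.W :=
  ((List.range' k (m + 1 - k)).map fun t => c.sN (t - 1)).prod

/-- `u_i^{(m)} = s_{m-i+1} s_{m-i+2} ⋯ s_m` -/
def uElt {n : ℕ} (c : RootSystemData n) (i m : ℕ) : c.W := c.uu (m - i + 1) m

end RootSystemData

/-- strict lexicographic order on `Fin m → ℤ` -/
def lexLT {m : ℕ} (x y : Fin m → ℤ) : Prop :=
  ∃ j, x j < y j ∧ ∀ k, k < j → x k = y k

/-- lexicographic order on `Fin m → ℤ` -/
def lexLE {m : ℕ} (x y : Fin m → ℤ) : Prop := x = y ∨ lexLT x y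

/-- the grading `gr(q_{α_{j+1}^∨}) ∈ ℤ^{r+1}` (for the `0`-based index `j < r`), when
`Δ_P` is of type `A_r`: in `1`-based terms, `gr(q_{α_1^∨}) = 2·e_1` and
`gr(q_{α_j^∨}) = (1-j)·e_{j-1} + (1+j)·e_j` for `2 ≤ j ≤ r`. -/
def grQ (r j : ℕ) : Fin (r + 1) → ℤ := fun k =>
  (if (k : ℕ) = j then (j : ℤ) + 2 else 0) + (if (k : ℕ) + 1 = j then -(j : ℤ) else 0)

/-- the grading `gr(q_λ)` for `λ ∈ Q_P^∨` (coordinates in simple coroots), extended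
additively from the `gr(q_{α_j^∨})`, when `Δ_P` is of type `A_r` -/
def grQlam (n r : ℕ) (lam : Fin n → ℤ) : Fin (r + 1) → ℤ :=
  fun k => ∑ j, lam j * grQ r (j : ℕ) k

namespace RootSystemData

variable {n : ℕ} (c : RootSystemData n)

/-! ### The invariant form -/

/-- The pairing `⟨x, λ⟩` of the root lattice with the coroot lattice, as a bilinear map; this is
`RootSystemData.pair` in bundled form, which makes the `map_*` lemmas available. -/
def pairing : (Fin n → ℤ) →ₗ[ℤ] (Fin n → ℤ) →ₗ[ℤ] ℤ :=
  Matrix.toLinearMap₂' ℤ (Matrix.of c.A)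

lemma pairing_apply (x l : Fin n → ℤ) : c.pairing x l = ∑ i, ∑ j, x i * c.A i j * l j := by
  simp only [pairing, Matrix.toLinearMap₂'_apply, Matrix.of_apply, smul_eq_mul]
  exact Finset.sum_congr rfl fun i _ => Finset.sum_congr rfl fun j _ => by ring

lemma sroot_mem (i : Fin n) : c.sroot i ∈ c.R := c.simple_mem i

lemma sroot_nonneg (i : Fin n) : 0 ≤ c.sroot i := Pi.single_nonneg.mpr zero_le_one

lemma cor_sroot (i : Fin n) : c.cor (c.sroot i) = c.sroot i := c.cor_simple i

lemma eq_sum_smul_sroot (x : Fin n → ℤ) : x = ∑ i, x i • c.sroot i :=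
  (pi_eq_sum_univ' x).trans (by simp [sroot])

section Reflection

variable {c} {γ δ : Fin n → ℤ}

lemma pairing_cor_self (hγ : γ ∈ c.R) : c.pairing γ (c.cor γ) = 2 := by
  rw [pairing_apply, c.pair_self γ hγ]

lemma act_σ (hγ : γ ∈ c.R) (x : Fin n → ℤ) :
    c.act (c.σ γ) x = x - c.pairing x (c.cor γ) • γ := by
  rw [pairing_apply, c.act_refl γ hγ]

lemma cor_act_σ (hγ : γ ∈ c.R) (hδ : δ ∈ c.R) :
    c.cor (c.act (c.σ γ) δ) = c.cor δ - c.pairing γ (c.cor δ) • c.cor γ := by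
  rw [pairing_apply, c.cor_refl γ hγ δ hδ]

lemma act_σ_act_σ (hγ : γ ∈ c.R) (x : Fin n → ℤ) : c.act (c.σ γ) (c.act (c.σ γ) x) = x := by
  rw [← c.act_mul, c.refl_sq γ hγ, c.act_one]

lemma act_σ_self (hγ : γ ∈ c.R) : c.act (c.σ γ) γ = -γ := by
  rw [act_σ hγ, pairing_cor_self hγ]
  module

lemma pairing_act_σ_cor_act_σ (hγ : γ ∈ c.R) (hδ : δ ∈ c.R) (x : Fin n → ℤ) :
    c.pairing (c.act (c.σ γ) x) (c.cor (c.act (c.σ γ) δ)) = c.pairing x (c.cor δ) := by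
  rw [act_σ hγ, cor_act_σ hγ hδ]
  simp only [map_sub, map_smul, LinearMap.sub_apply, LinearMap.smul_apply, smul_eq_mul,
    pairing_cor_self hγ]
  ring

variable (c) in
/-- The Weyl-invariant symmetric form `(x, y) = ∑_{δ ∈ R} ⟨x, δ^∨⟩ ⟨y, δ^∨⟩` on the root lattice,
used to compare the coefficients of a root with those of its coroot. -/
def form : LinearMap.BilinForm ℤ (Fin n → ℤ) :=
  ∑ δ ∈ c.R,
    LinearMap.BilinForm.linMulLin (c.pairing.flip (c.cor δ)) (c.pairing.flip (c.cor δ))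

lemma form_apply (x y : Fin n → ℤ) :
    c.form x y = ∑ δ ∈ c.R, c.pairing x (c.cor δ) * c.pairing y (c.cor δ) := by
  simp [form]

lemma form_comm (x y : Fin n → ℤ) : c.form x y = c.form y x := by
  simp only [form_apply, mul_comm]

lemma form_act_σ (hγ : γ ∈ c.R) (x y : Fin n → ℤ) :
    c.form (c.act (c.σ γ) x) (c.act (c.σ γ) y) = c.form x y := by
  simp only [form_apply]
  refine Finset.sum_nbij' (c.act (c.σ γ)) (c.act (c.σ γ)) (c.act_mem _) (c.act_mem _)
    (fun δ _ => act_σ_act_σ hγ δ) (fun δ _ => act_σ_act_σ hγ δ) fun δ hδ => ?_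
  rw [← pairing_act_σ_cor_act_σ hγ hδ, ← pairing_act_σ_cor_act_σ hγ hδ, act_σ_act_σ hγ,
    act_σ_act_σ hγ]

lemma form_self_pos (hγ : γ ∈ c.R) : 0 < c.form γ γ := by
  rw [form_apply]
  refine Finset.sum_pos' (fun δ _ => mul_self_nonneg _) ⟨γ, hγ, ?_⟩
  rw [pairing_cor_self hγ]
  norm_num

lemma two_mul_form (hγ : γ ∈ c.R) (x : Fin n → ℤ) :
    2 * c.form x γ = c.pairing x (c.cor γ) * c.form γ γ := by
  have hinv := form_act_σ hγ x γ
  rw [act_σ_self hγ, act_σ hγ] at hinv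
  simp only [map_sub, map_neg, map_smul, LinearMap.sub_apply, LinearMap.smul_apply,
    smul_eq_mul] at hinv
  linarith

end Reflection

/-! ### Positive roots and their coroots -/

lemma act_s (i : Fin n) (x : Fin n → ℤ) :
    c.act (c.s i) x = x - c.pairing x (c.sroot i) • c.sroot i := by
  rw [s, act_σ (c.sroot_mem i), cor_sroot]

lemma act_s_sroot (i : Fin n) : c.act (c.s i) (c.sroot i) = -c.sroot i :=
  act_σ_self (c.sroot_mem i)

lemma act_s_apply_of_ne {i j : Fin n} (hj : j ≠ i) (x : Fin n → ℤ) : c.act (c.s i) x j = x j := by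
  simp [act_s, sroot, hj]

lemma s_mul_s (i : Fin n) : c.s i * c.s i = 1 := c.refl_sq _ (c.sroot_mem i)

lemma s_inv (i : Fin n) : (c.s i)⁻¹ = c.s i := inv_eq_of_mul_eq_one_left (c.s_mul_s i)

variable {c}

lemma nonneg_of_apply_pos {γ : Fin n → ℤ} (hγ : γ ∈ c.R) {j : Fin n} (hj : 0 < γ j) : 0 ≤ γ :=
  (c.pos_or_neg γ hγ).resolve_right fun h => (h j).not_gt hj

lemma neg_nonneg_iff_not_nonneg {γ : Fin n → ℤ} (hγ : γ ∈ c.R) : 0 ≤ -γ ↔ ¬ 0 ≤ γ := by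
  rw [neg_nonneg]
  exact ⟨fun h h0 => c.root_ne_zero γ hγ (le_antisymm h h0), (c.pos_or_neg γ hγ).resolve_left⟩

lemma act_s_nonneg {i : Fin n} {γ : Fin n → ℤ} (hγ : γ ∈ c.R) (h0 : 0 ≤ γ)
    (hne : γ ≠ c.sroot i) : 0 ≤ c.act (c.s i) γ := by
  obtain ⟨j, hji, hj⟩ : ∃ j ≠ i, 0 < γ j := by
    by_contra! hle
    have hmul : γ = γ i • c.sroot i := by
      funext j
      rcases eq_or_ne j i with rfl | hj
      · simp [sroot]
      · simpa [sroot, hj] using le_antisymm (hle j hj) (h0 j)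
    rcases c.reduced _ (c.sroot_mem i) (γ i) (hmul ▸ hγ) with h1 | h1
    · exact hne (by rwa [h1, one_smul] at hmul)
    · exact absurd (h0 i) (by simp [h1])
  exact nonneg_of_apply_pos (c.act_mem _ γ hγ) (j := j) (by rwa [act_s_apply_of_ne c hji])

lemma exists_pairing_sroot_pos {γ : Fin n → ℤ} (hγ : γ ∈ c.R) (h0 : 0 ≤ γ) :
    ∃ i, 0 < c.pairing γ (c.sroot i) := by
  have hsum : c.form γ γ = ∑ i, γ i * c.form γ (c.sroot i) :=
    (congrArg (c.form γ) (c.eq_sum_smul_sroot γ)).trans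
      (by simp only [map_sum, map_smul, smul_eq_mul])
  obtain ⟨i, -, hi⟩ : ∃ i ∈ Finset.univ, 0 < γ i * c.form γ (c.sroot i) :=
    Finset.exists_lt_of_sum_lt
      (by simpa only [Finset.sum_const_zero, ← hsum] using form_self_pos hγ)
  have hform : 0 < c.form γ (c.sroot i) := pos_of_mul_pos_right hi (h0 i)
  have htwo := two_mul_form (c.sroot_mem i) γ
  rw [cor_sroot] at htwo
  exact ⟨i, pos_of_mul_pos_left (htwo ▸ by positivity) (form_self_pos (c.sroot_mem i)).le⟩

lemma posRoot_induction {p : (Fin n → ℤ) → Prop} (simple : ∀ i, p (c.sroot i))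
    (reflect : ∀ i, ∀ γ ∈ c.R, p (c.act (c.s i) γ) → p γ) {γ : Fin n → ℤ} (hγ : γ ∈ c.R)
    (h0 : 0 ≤ γ) : p γ := by
  induction hN : (∑ i, γ i).toNat using Nat.strong_induction_on generalizing γ with
  | _ N ih =>
    obtain ⟨i, hi⟩ := exists_pairing_sroot_pos hγ h0
    by_cases hne : γ = c.sroot i
    · exact hne ▸ simple i
    have hpos := act_s_nonneg hγ h0 hne
    have hheight : ∑ k, c.act (c.s i) γ k = ∑ k, γ k - c.pairing γ (c.sroot i) := by
      rw [act_s]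
      simp [← Finset.mul_sum, sroot]
    have hheight_nonneg : 0 ≤ ∑ k, c.act (c.s i) γ k := Finset.sum_nonneg fun k _ => hpos k
    exact reflect i γ hγ (ih _ (by omega) (c.act_mem _ γ hγ) hpos rfl)

/-- The identity `γ^∨ = 2γ / (γ, γ)` in coordinates, with denominators cleared. -/
lemma form_self_mul_cor_apply {γ : Fin n → ℤ} (hγ : γ ∈ c.R) (h0 : 0 ≤ γ) (j : Fin n) :
    c.form γ γ * c.cor γ j = γ j * c.form (c.sroot j) (c.sroot j) := by
  refine posRoot_induction (c := c)
    (p := fun γ => c.form γ γ * c.cor γ j = γ j * c.form (c.sroot j) (c.sroot j))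
    (fun i => ?_) (fun i γ hγ ih => ?_) hγ h0
  · rcases eq_or_ne j i with rfl | hj
    · rw [cor_sroot, mul_comm]
    · rw [cor_sroot]
      simp [sroot, hj]
  · rw [s, form_act_σ (c.sroot_mem i), cor_act_σ (c.sroot_mem i) hγ, cor_sroot, ← s] at ih
    rcases eq_or_ne j i with rfl | hj
    · have hγj := two_mul_form hγ (c.sroot j)
      have hjγ := two_mul_form (c.sroot_mem j) γ
      rw [cor_sroot, form_comm] at hjγ
      rw [act_s] at ih
      simp only [sroot, Pi.sub_apply, Pi.smul_apply, Pi.single_eq_same, smul_eq_mul,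
        mul_one] at ih hγj hjγ ⊢
      linarith
    · simpa [act_s_apply_of_ne c hj, sroot, hj] using ih

lemma cor_apply_pos {γ : Fin n → ℤ} (hγ : γ ∈ c.R) (h0 : 0 ≤ γ) {j : Fin n} (hj : 0 < γ j) :
    0 < c.cor γ j := by
  have hpos := mul_pos hj (form_self_pos (c.sroot_mem j))
  rw [← form_self_mul_cor_apply hγ h0] at hpos
  exact pos_of_mul_pos_right hpos (form_self_pos hγ).le

/-! ### Linearity of the action -/

variable (c)

lemma act_add (w : c.W) (x y : Fin n → ℤ) : c.act w (x + y) = c.act w x + c.act w y := by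
  obtain ⟨l, rfl⟩ := c.generated w
  induction l with
  | nil => simp only [List.map_nil, List.prod_nil, c.act_one]
  | cons i l ih =>
    simp only [List.map_cons, List.prod_cons, c.act_mul, ih, act_σ (c.simple_mem i), map_add,
      LinearMap.add_apply]
    module

/-- The action of `w` on the root lattice, as an additive map. -/
def actHom (w : c.W) : (Fin n → ℤ) →+ (Fin n → ℤ) := AddMonoidHom.mk' (c.act w) (c.act_add w)

lemma act_neg (w : c.W) (x : Fin n → ℤ) : c.act w (-x) = -c.act w x := map_neg (c.actHom w) x

lemma act_eq_sum (w : c.W) (x : Fin n → ℤ) : c.act w x = ∑ i, x i • c.act w (c.sroot i) := by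
  calc c.actHom w x = c.actHom w (∑ i, x i • c.sroot i) :=
        congrArg _ (c.eq_sum_smul_sroot x)
    _ = ∑ i, x i • c.actHom w (c.sroot i) := by simp only [map_sum, map_zsmul]

/-! ### Exchange property and length -/

/-- If `w α_j < 0`, then a word for `w s_j` arises from a word for `w` by deleting the letter `i`
that turns the positive root `α_i` into a negative one. -/
lemma exists_word_mul_s (j : Fin n) (l : List (Fin n))
    (h : ¬ 0 ≤ c.act (l.map c.s).prod (c.sroot j)) :
    ∃ l' : List (Fin n), l'.length + 1 = l.length ∧
      (l'.map c.s).prod = (l.map c.s).prod * c.s j := by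
  induction l with
  | nil =>
    rw [List.map_nil, List.prod_nil, c.act_one] at h
    exact absurd (c.sroot_nonneg j) h
  | cons i l ih =>
    rw [List.map_cons, List.prod_cons] at h ⊢
    by_cases h0 : 0 ≤ c.act (l.map c.s).prod (c.sroot j)
    · have hi : c.act (l.map c.s).prod (c.sroot j) = c.sroot i := by
        by_contra hne
        exact h (c.act_mul _ _ _ ▸ act_s_nonneg (c.act_mem _ _ (c.sroot_mem j)) h0 hne)
      have hconj : c.s i = (l.map c.s).prod * c.s j * (l.map c.s).prod⁻¹ := by
        rw [s, ← hi, c.refl_act _ _ (c.sroot_mem j), s]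
      exact ⟨l, rfl, by simp [hconj, mul_assoc, c.s_mul_s]⟩
    · obtain ⟨l', hlength, hprod⟩ := ih h0
      exact ⟨i :: l', by simp [hlength], by simp [hprod, mul_assoc]⟩

lemma exists_reduced_word (w : c.W) :
    ∃ l : List (Fin n), l.length = c.len w ∧ (l.map c.s).prod = w := by
  obtain ⟨l, hl⟩ := c.generated w
  exact Nat.sInf_mem (s := {k | ∃ l : List (Fin n), l.length = k ∧ (l.map c.s).prod = w})
    ⟨l.length, l, rfl, hl.symm⟩

lemma len_le_length {w : c.W} {l : List (Fin n)} (h : (l.map c.s).prod = w) :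
    c.len w ≤ l.length :=
  Nat.sInf_le ⟨l, rfl, h⟩

lemma len_eq_zero {w : c.W} : c.len w = 0 ↔ w = 1 := by
  constructor
  · intro h
    obtain ⟨l, hlength, hprod⟩ := c.exists_reduced_word w
    rw [h, List.length_eq_zero_iff] at hlength
    simpa [hlength] using hprod.symm
  · rintro rfl
    simpa using c.len_le_length (w := 1) (l := []) (by simp)

lemma len_inv_le (w : c.W) : c.len w⁻¹ ≤ c.len w := by
  obtain ⟨l, hlength, rfl⟩ := c.exists_reduced_word w
  rw [← hlength, ← List.length_reverse]
  refine c.len_le_length ?_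
  simp [List.prod_inv_reverse, List.map_reverse, Function.comp_def, c.s_inv]

lemma len_inv (w : c.W) : c.len w⁻¹ = c.len w :=
  le_antisymm (c.len_inv_le w) (by simpa using c.len_inv_le w⁻¹)

lemma len_s_mul_le (w : c.W) (i : Fin n) : c.len (c.s i * w) ≤ c.len w + 1 := by
  obtain ⟨l, hlength, hprod⟩ := c.exists_reduced_word w
  simpa [hlength] using c.len_le_length (w := c.s i * w) (l := i :: l) (by simp [hprod])

lemma len_s_mul (w : c.W) (i : Fin n) : c.len (c.s i * w) = c.len (w⁻¹ * c.s i) := by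
  rw [← c.len_inv, mul_inv_rev, s_inv]

variable {c}

lemma len_mul_s_of_not_nonneg {w : c.W} {j : Fin n} (h : ¬ 0 ≤ c.act w (c.sroot j)) :
    c.len (w * c.s j) + 1 = c.len w := by
  obtain ⟨l, hlength, rfl⟩ := c.exists_reduced_word w
  obtain ⟨l', hlength', hprod'⟩ := c.exists_word_mul_s j l h
  have hle := c.len_le_length hprod'
  have hge := c.len_s_mul_le ((l.map c.s).prod * c.s j)⁻¹ j
  rw [c.len_inv, len_s_mul, inv_inv, mul_assoc, s_mul_s, mul_one] at hge
  omega

lemma len_mul_s_of_nonneg {w : c.W} {j : Fin n} (h : 0 ≤ c.act w (c.sroot j)) :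
    c.len (w * c.s j) = c.len w + 1 := by
  have hneg : ¬ 0 ≤ c.act (w * c.s j) (c.sroot j) := by
    rw [c.act_mul, act_s_sroot, act_neg, neg_nonneg_iff_not_nonneg (c.act_mem _ _ (c.sroot_mem j))]
    exact not_not.mpr h
  simpa only [mul_assoc, s_mul_s, mul_one] using (len_mul_s_of_not_nonneg hneg).symm

/-! ### Parabolic subgroups and minimal coset representatives -/

variable {S T : Finset (Fin n)}

lemma s_mem_Wsub {i : Fin n} (hi : i ∈ S) : c.s i ∈ c.Wsub S :=
  Subgroup.subset_closure ⟨i, hi, rfl⟩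

lemma Wsub_mono (h : S ⊆ T) : c.Wsub S ≤ c.Wsub T :=
  Subgroup.closure_mono (Set.image_mono (Finset.coe_subset.mpr h))

variable (c) in
lemma Wsub_empty : c.Wsub ∅ = ⊥ := by
  simp [Wsub]

variable (c) in
lemma Wsub_univ : c.Wsub Finset.univ = ⊤ := by
  refine eq_top_iff.mpr fun w _ => ?_
  obtain ⟨l, rfl⟩ := c.generated w
  refine Subgroup.list_prod_mem _ fun y hy => ?_
  obtain ⟨i, -, rfl⟩ := List.mem_map.mp hy
  exact s_mem_Wsub (Finset.mem_univ i)

lemma Wsub_induction {p : ∀ u, u ∈ c.Wsub S → Prop} (one : p 1 (one_mem _))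
    (mul_s : ∀ u hu, ∀ i, ∀ hi : i ∈ S, p u hu → p (u * c.s i) (mul_mem hu (s_mem_Wsub hi)))
    {u : c.W} (hu : u ∈ c.Wsub S) : p u hu := by
  induction hu using Subgroup.closure_induction_right with
  | one => exact one
  | mul_right u hu _ hs ih =>
    obtain ⟨i, hi, rfl⟩ := hs
    exact mul_s u hu i hi ih
  | mul_inv_cancel u hu _ hs ih =>
    obtain ⟨i, hi, rfl⟩ := hs
    simpa only [s_inv] using mul_s u hu i hi ih

lemma act_apply_of_notMem {u : c.W} (hu : u ∈ c.Wsub S) {j : Fin n} (hj : j ∉ S)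
    (x : Fin n → ℤ) : c.act u x j = x j := by
  induction hu using Wsub_induction generalizing x with
  | one => rw [c.act_one]
  | mul_s u _ i hi ih => rw [c.act_mul, ih, act_s_apply_of_ne c (ne_of_mem_of_not_mem hi hj).symm]

lemma suppIn_act {u : c.W} (hu : u ∈ c.Wsub S) {x : Fin n → ℤ} (hx : suppIn S x) :
    suppIn S (c.act u x) := fun j hj => by
  rw [act_apply_of_notMem hu hj, hx j hj]

lemma suppIn_sroot {i : Fin n} (hi : i ∈ S) : suppIn S (c.sroot i) := fun _ hj =>
  Pi.single_eq_of_ne (ne_of_mem_of_not_mem hi hj).symm 1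

variable (c) in
/-- `v` sends the simple roots indexed by `S` to positive roots; equivalently, `v` has minimal
length in the coset `v W_S`. -/
def PosOn (S : Finset (Fin n)) (v : c.W) : Prop := ∀ i ∈ S, 0 ≤ c.act v (c.sroot i)

lemma PosOn.act_nonneg {v : c.W} (hv : c.PosOn S v) {x : Fin n → ℤ} (hx : 0 ≤ x)
    (hS : suppIn S x) : 0 ≤ c.act v x := by
  rw [c.act_eq_sum]
  refine Finset.sum_nonneg fun i _ => ?_
  by_cases hi : i ∈ S
  · exact smul_nonneg (hx i) (hv i hi)
  · rw [hS i hi, zero_smul]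

lemma PosOn.act_nonneg_iff {v : c.W} (hv : c.PosOn S v) {γ : Fin n → ℤ} (hγ : γ ∈ c.R)
    (hS : suppIn S γ) : 0 ≤ c.act v γ ↔ 0 ≤ γ := by
  refine ⟨fun h => ?_, fun h => hv.act_nonneg h hS⟩
  contrapose! h
  rw [← neg_nonneg_iff_not_nonneg hγ] at h
  rw [← neg_nonneg_iff_not_nonneg (c.act_mem v γ hγ), ← act_neg]
  exact hv.act_nonneg h fun j hj => neg_eq_zero.mpr (hS j hj)

lemma PosOn.len_mul {v u : c.W} (hv : c.PosOn S v) (hu : u ∈ c.Wsub S) :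
    c.len (v * u) = c.len v + c.len u := by
  induction hu using Wsub_induction with
  | one => rw [mul_one, c.len_eq_zero.mpr rfl, add_zero]
  | mul_s u hu i hi ih =>
    have hiff : 0 ≤ c.act (v * u) (c.sroot i) ↔ 0 ≤ c.act u (c.sroot i) := by
      rw [c.act_mul, hv.act_nonneg_iff (c.act_mem u _ (c.sroot_mem i))
        (suppIn_act hu (suppIn_sroot hi))]
    rw [← mul_assoc]
    by_cases h : 0 ≤ c.act u (c.sroot i)
    · rw [len_mul_s_of_nonneg h, len_mul_s_of_nonneg (hiff.mpr h), ih, add_assoc]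
    · have hu := len_mul_s_of_not_nonneg h
      have hvu := len_mul_s_of_not_nonneg (mt hiff.mp h)
      omega

lemma PosOn.eq_and_eq_of_mul_eq {x y p q : c.W} (hx : c.PosOn S x) (hy : c.PosOn S y)
    (hp : p ∈ c.Wsub S) (hq : q ∈ c.Wsub S) (h : x * p = y * q) : x = y ∧ p = q := by
  have hz : q * p⁻¹ ∈ c.Wsub S := mul_mem hq (inv_mem hp)
  have hxy : x = y * (q * p⁻¹) := by rw [← mul_assoc, ← h, mul_inv_cancel_right]
  have hyx : y = x * (q * p⁻¹)⁻¹ := eq_mul_inv_of_mul_eq hxy.symm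
  have hlen := hy.len_mul hz
  have hlen' := hx.len_mul (inv_mem hz)
  rw [← hxy] at hlen
  rw [← hyx] at hlen'
  have hz1 : q * p⁻¹ = 1 := c.len_eq_zero.mp (by omega)
  exact ⟨by rw [hxy, hz1, mul_one], (mul_inv_eq_one.mp hz1).symm⟩

lemma MinRep.posOn {v : c.W} (hv : c.MinRep T S v) : c.PosOn S v := by
  intro i hi
  by_contra h
  have hdesc := len_mul_s_of_not_nonneg h
  have hmin := hv.2 _ (s_mem_Wsub hi)
  omega

lemma exists_eq_minRep_mul (hST : S ⊆ T) {w : c.W} (hw : w ∈ c.Wsub T) :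
    ∃ x u, c.MinRep T S x ∧ u ∈ c.Wsub S ∧ w = x * u := by
  obtain ⟨y, hy, hmin⟩ :=
    exists_minimalFor_of_wellFoundedLT (· ∈ c.Wsub S) (fun y => c.len (w * y)) ⟨1, one_mem _⟩
  refine ⟨w * y, y⁻¹, ⟨mul_mem hw (Wsub_mono hST hy), fun z hz => ?_⟩, inv_mem hy,
    (mul_inv_cancel_right w y).symm⟩
  rw [mul_assoc]
  exact (le_total _ _).elim id (hmin (mul_mem hy hz))

/-- Otherwise `x⁻¹` would be positive on `T`, and `ℓ(x⁻¹) + ℓ(x) = ℓ(x⁻¹ x) = 0`. -/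
lemma exists_left_descent {x : c.W} (hx : x ∈ c.Wsub T) (hx1 : x ≠ 1) :
    ∃ a ∈ T, ¬ 0 ≤ c.act x⁻¹ (c.sroot a) := by
  by_contra! hpos
  have hlen := PosOn.len_mul (v := x⁻¹) hpos hx
  rw [inv_mul_cancel, c.len_eq_zero.mpr rfl] at hlen
  exact hx1 (c.len_eq_zero.mp (by omega))

lemma MinRep.s_mul {x : c.W} (hx : c.MinRep T S x) {a : Fin n} (ha : a ∈ T)
    (hlen : c.len x = c.len (c.s a * x) + 1) : c.MinRep T S (c.s a * x) := by
  refine ⟨mul_mem (s_mem_Wsub ha) hx.1, fun y hy => ?_⟩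
  have hmin := hx.2 y hy
  have hle := c.len_s_mul_le (c.s a * x * y) a
  rw [mul_assoc, ← mul_assoc, s_mul_s, one_mul] at hle
  rw [mul_assoc]
  omega

lemma MinRep.exists_cover {x : c.W} (hx : c.MinRep T S x) (hx1 : x ≠ 1) :
    ∃ x' β j, c.MinRep T S x' ∧ c.len x = c.len x' + 1 ∧ β ∈ c.R ∧ x = x' * c.σ β ∧
      j ∈ T ∧ j ∉ S ∧ 0 < β j := by
  obtain ⟨a, ha, hdesc⟩ := exists_left_descent hx.1 hx1
  have hlen : c.len x = c.len (c.s a * x) + 1 := by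
    rw [len_s_mul, len_mul_s_of_not_nonneg hdesc, len_inv]
  have hx' := hx.s_mul ha hlen
  set x' := c.s a * x
  set β := c.act x'⁻¹ (c.sroot a) with hβ
  have hβR : β ∈ c.R := c.act_mem _ _ (c.sroot_mem a)
  have hβT : suppIn T β := suppIn_act (inv_mem hx'.1) (suppIn_sroot ha)
  have hβ0 : 0 ≤ β := by
    rw [hβ, mul_inv_rev, s_inv, c.act_mul, act_s_sroot, act_neg]
    exact (neg_nonneg_iff_not_nonneg (c.act_mem _ _ (c.sroot_mem a))).mpr hdesc
  have hxβ : x = x' * c.σ β := by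
    rw [hβ, c.refl_act _ _ (c.sroot_mem a), ← s, inv_inv, mul_assoc x'⁻¹, mul_inv_cancel_left,
      ← mul_assoc, s_mul_s, one_mul]
  have hactβ : ¬ 0 ≤ c.act x β := by
    have hxβa : c.act x β = -c.sroot a := by
      rw [hβ, ← c.act_mul, mul_inv_rev, mul_inv_cancel_left, s_inv, act_s_sroot]
    rw [hxβa, neg_nonneg_iff_not_nonneg (c.sroot_mem a)]
    exact not_not.mpr (c.sroot_nonneg a)
  obtain ⟨j, hjS, hj⟩ : ∃ j ∉ S, β j ≠ 0 := by
    by_contra! hβS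
    exact hactβ (hx.posOn.act_nonneg hβ0 hβS)
  exact ⟨x', β, j, hx', hlen, hβR, hxβ, by_contra fun hjT => hj (hβT j hjT), hjS,
    (hβ0 j).lt_of_ne' hj⟩

lemma MinRep.exists_cover_mul {x u : c.W} (hx : c.MinRep T S x) (hx1 : x ≠ 1)
    (hu : u ∈ c.Wsub S) :
    ∃ x' γ j, c.MinRep T S x' ∧ c.len x = c.len x' + 1 ∧ γ ∈ c.R ∧ 0 ≤ γ ∧
      x * u = x' * u * c.σ γ ∧ j ∈ T ∧ j ∉ S ∧ 0 < γ j := by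
  obtain ⟨x', β, j, hx', hlen, hβ, rfl, hjT, hjS, hj⟩ := hx.exists_cover hx1
  have hγ : c.act u⁻¹ β ∈ c.R := c.act_mem _ β hβ
  have hγj : 0 < c.act u⁻¹ β j := by rwa [act_apply_of_notMem (inv_mem hu) hjS]
  refine ⟨x', c.act u⁻¹ β, j, hx', hlen, hγ, nonneg_of_apply_pos hγ hγj, ?_, hjT, hjS, hγj⟩
  rw [c.refl_act _ β hβ]
  group

/-! ### Decompositions along a chain of parabolic subgroups -/

section Chain

variable {N : ℕ}

variable (c) in
/-- `v 0, …, v (N-1)` is the decomposition `w = v (N-1) ⋯ v 0` of `w` associated to the chain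
`S 0 ⊆ ⋯ ⊆ S N` of sets of simple roots: `v k` lies in `W_{S (k+1)}` and has minimal length in its
coset modulo `W_{S k}`. -/
def IsChainDecomp (S : Fin (N + 1) → Finset (Fin n)) (w : c.W) (v : Fin N → c.W) : Prop :=
  (∀ k, c.MinRep (S k.succ) (S k.castSucc) (v k)) ∧ w = (List.ofFn v).reverse.prod

lemma isChainDecomp_succ_iff {S : Fin (N + 2) → Finset (Fin n)} {w : c.W}
    {v : Fin (N + 1) → c.W} :
    c.IsChainDecomp S w v ↔
      c.MinRep (S (Fin.last (N + 1))) (S (Fin.last N).castSucc) (v (Fin.last N)) ∧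
        ∃ u, c.IsChainDecomp (Fin.init S) u (Fin.init v) ∧ w = v (Fin.last N) * u := by
  simp only [IsChainDecomp, Fin.forall_fin_succ', List.ofFn_succ', List.concat_eq_append,
    List.reverse_append, List.reverse_singleton, List.prod_append, List.prod_singleton]
  constructor
  · rintro ⟨⟨hinit, hlast⟩, hw⟩
    exact ⟨hlast, _, ⟨hinit, rfl⟩, hw⟩
  · rintro ⟨hlast, _, ⟨hinit, rfl⟩, hw⟩
    exact ⟨⟨hinit, hlast⟩, hw⟩

lemma monotone_init {S : Fin (N + 2) → Finset (Fin n)} (hS : Monotone S) :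
    Monotone (Fin.init S : Fin (N + 1) → Finset (Fin n)) :=
  hS.comp Fin.strictMono_castSucc.monotone

variable {S : Fin (N + 1) → Finset (Fin n)} {w : c.W} {v : Fin N → c.W}

lemma IsChainDecomp.mem_Wsub (hS : Monotone S) (h : c.IsChainDecomp S w v) :
    w ∈ c.Wsub (S (Fin.last N)) := by
  rw [h.2]
  refine Subgroup.list_prod_mem _ fun x hx => ?_
  obtain ⟨k, rfl⟩ := (List.mem_ofFn' _ _).mp (List.mem_reverse.mp hx)
  exact Wsub_mono (hS (Fin.le_last _)) (h.1 k).1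

lemma exists_isChainDecomp (hS : Monotone S) (h0 : S 0 = ∅) (hw : w ∈ c.Wsub (S (Fin.last N))) :
    ∃ v, c.IsChainDecomp S w v := by
  induction N generalizing w with
  | zero =>
    have hw1 : w = 1 := by simpa [h0, Wsub_empty] using hw
    exact ⟨Fin.elim0, fun k => k.elim0, by simpa using hw1⟩
  | succ N ih =>
    obtain ⟨x, u, hx, hu, rfl⟩ :=
      exists_eq_minRep_mul (hS (Fin.le_last (Fin.last N).castSucc)) hw
    obtain ⟨v, hv⟩ := ih (monotone_init hS) h0 hu
    refine ⟨Fin.snoc (α := fun _ => c.W) v x, ?_⟩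
    rw [isChainDecomp_succ_iff, Fin.snoc_last, Fin.init_snoc]
    exact ⟨hx, u, hv, rfl⟩

lemma IsChainDecomp.unique (hS : Monotone S) {v' : Fin N → c.W} (h : c.IsChainDecomp S w v)
    (h' : c.IsChainDecomp S w v') : v = v' := by
  induction N generalizing w with
  | zero => exact Subsingleton.elim v v'
  | succ N ih =>
    obtain ⟨hx, u, hu, hw⟩ := isChainDecomp_succ_iff.mp h
    obtain ⟨hx', u', hu', hw'⟩ := isChainDecomp_succ_iff.mp h'
    have hS' := monotone_init hS
    have huS := hu.mem_Wsub hS'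
    have huS' := hu'.mem_Wsub hS'
    obtain ⟨hlast, rfl⟩ := hx.posOn.eq_and_eq_of_mul_eq hx'.posOn huS huS' (hw.symm.trans hw')
    rw [← Fin.snoc_init_self v, ← Fin.snoc_init_self v', ih hS' hu hu', hlast]

lemma IsChainDecomp.exists_cover (hS : Monotone S) (h : c.IsChainDecomp S w v) (hw1 : w ≠ 1) :
    ∃ w' γ j m x', γ ∈ c.R ∧ 0 ≤ γ ∧ w = w' * c.σ γ ∧ c.len w = c.len w' + 1 ∧ 0 < γ j ∧
      j ∈ S m.succ ∧ j ∉ S m.castSucc ∧ c.IsChainDecomp S w' (Function.update v m x') ∧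
      c.len (v m) = c.len x' + 1 := by
  induction N generalizing w with
  | zero => exact absurd (by simpa using h.2) hw1
  | succ N ih =>
    obtain ⟨hx, u, hu, rfl⟩ := isChainDecomp_succ_iff.mp h
    by_cases hx1 : v (Fin.last N) = 1
    · rw [hx1, one_mul] at hw1 ⊢
      obtain ⟨w', γ, j, m, x', hγ, hγ0, hwγ, hlen, hj, hjS, hjS', hv', hx'⟩ :=
        ih (monotone_init hS) hu hw1
      refine ⟨w', γ, j, m.castSucc, x', hγ, hγ0, hwγ, hlen, hj, hjS, hjS', ?_, hx'⟩
      rw [isChainDecomp_succ_iff, Function.update_of_ne (Fin.castSucc_lt_last m).ne',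
        Fin.init_update_castSucc]
      exact ⟨hx, w', hv', by rw [hx1, one_mul]⟩
    · have huS := hu.mem_Wsub (monotone_init hS)
      obtain ⟨x', γ, j, hx', hlen, hγ, hγ0, hxγ, hjT, hjS, hj⟩ := hx.exists_cover_mul hx1 huS
      refine ⟨x' * u, γ, j, Fin.last N, x', hγ, hγ0, hxγ, ?_, hj, hjT, hjS, ?_, hlen⟩
      · rw [hx.posOn.len_mul huS, hx'.posOn.len_mul huS, hlen, add_right_comm]
      · rw [isChainDecomp_succ_iff, Function.update_self, Fin.init_update_last]
        exact ⟨hx', u, hu, rfl⟩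

end Chain

end RootSystemData

section DeltaSet

variable {n r : ℕ}

lemma mem_deltaSet {k : ℕ} {j : Fin n} : j ∈ deltaSet n r k ↔ k = r + 1 ∨ (j : ℕ) < k := by
  unfold deltaSet
  split_ifs with h <;> simp [h]

lemma monotone_deltaSet : Monotone fun k : Fin (r + 2) => deltaSet n r k := by
  intro k l hkl j
  simp only [mem_deltaSet]
  omega

lemma deltaSet_zero : deltaSet n r 0 = ∅ := by
  simp [deltaSet]

lemma deltaSet_last : deltaSet n r (r + 1) = Finset.univ := if_pos rfl

lemma min_eq_of_mem_deltaSet {m : Fin (r + 1)} {j : Fin n} (hj : j ∈ deltaSet n r (m + 1))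
    (hj' : j ∉ deltaSet n r m) : min (j : ℕ) r = m := by
  rw [mem_deltaSet] at hj hj'
  omega

lemma RootSystemData.isDecomp_iff_isChainDecomp {c : RootSystemData n} {w : c.W}
    {v : Fin (r + 1) → c.W} :
    c.IsDecomp r w v ↔ c.IsChainDecomp (fun k : Fin (r + 2) => deltaSet n r k) w v :=
  Iff.rfl

end DeltaSet

open RootSystemData in
theorem exists_quantum_chevalley_cover_general {n N : ℕ} (c : RootSystemData n)
    {S : Fin (N + 1) → Finset (Fin n)} (hS : Monotone S) (h0 : S 0 = ∅)
    {w : c.W} (hwS : w ∈ c.Wsub (S (Fin.last N))) (hw : w ≠ 1) :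
    ∃ (w' : c.W) (γ : Fin n → ℤ) (j : Fin n) (m : Fin N),
      γ ∈ c.R ∧ (∀ i, 0 ≤ γ i) ∧ w = w' * c.σ γ ∧ c.len w = c.len w' + 1 ∧ 0 < c.cor γ j ∧
      j ∈ S m.succ ∧ j ∉ S m.castSucc ∧
      ∀ v v', c.IsChainDecomp S w v → c.IsChainDecomp S w' v' →
        ∀ k, c.len (v k) = c.len (v' k) + if k = m then 1 else 0 := by
  obtain ⟨v₀, hv₀⟩ := exists_isChainDecomp hS h0 hwS
  obtain ⟨w', γ, j, m, x', hγ, hγ0, hwγ, hlen, hj, hjS, hjS', hv₀', hx'⟩ :=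
    hv₀.exists_cover hS hw
  refine ⟨w', γ, j, m, hγ, hγ0, hwγ, hlen, cor_apply_pos hγ hγ0 hj, hjS, hjS',
    fun v v' hv hv' k => ?_⟩
  rw [hv.unique hS hv₀, hv'.unique hS hv₀', Function.update_apply]
  split_ifs with hk
  · rw [hk, hx']
  · rw [add_zero]

/-- For every `w ≠ 1` there exist `w' ∈ W`, `γ ∈ R^+` and an index `j` with
`w = w'·s_γ`, `ℓ(w) = ℓ(w') + 1`, `⟨χ_j, γ^∨⟩ > 0`, and `gr(w) = gr(w') + e_m`,
where `m` is the unique index with `α_j ∈ Δ_m \ Δ_{m-1}` (in `0`-based coordinates,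
the grading coordinate `min j r`). -/
theorem exists_quantum_chevalley_cover {n : ℕ} (c : RootSystemData n)
    (r : ℕ) (hr1 : 1 ≤ r) (hrn : r < n)
    (w : c.W) (hw : w ≠ 1) :
    ∃ (w' : c.W) (γ : Fin n → ℤ) (j : Fin n),
      γ ∈ c.R ∧ (∀ i, 0 ≤ γ i) ∧
      w = w' * c.σ γ ∧ c.len w = c.len w' + 1 ∧ 0 < c.cor γ j ∧
      ∀ (v v' : Fin (r + 1) → c.W), c.IsDecomp r w v → c.IsDecomp r w' v' →
        ∀ k : Fin (r + 1),
          (c.len (v k) : ℤ) =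
            (c.len (v' k) : ℤ) + (if (k : ℕ) = min (j : ℕ) r then 1 else 0) := by
  obtain ⟨w', γ, j, m, hγ, hγ0, hwγ, hlen, hj, hjS, hjS', hgr⟩ :=
    exists_quantum_chevalley_cover_general c (monotone_deltaSet (r := r)) deltaSet_zero
      (by simp [deltaSet_last, c.Wsub_univ]) hw
  refine ⟨w', γ, j, hγ, hγ0, hwγ, hlen, hj, fun v v' hv hv' k => ?_⟩
  rw [RootSystemData.isDecomp_iff_isChainDecomp] at hv hv'
  simp [hgr v v' hv hv' k, min_eq_of_mem_deltaSet hjS hjS', Fin.ext_iff]
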